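/- Second inversion relation for intertwining vectors: for all b ∈ ℤ, all ε, ε' ∈ {+1,−1}, and all u ∈ ℂ with [u] ≠ 0 and [b] ≠ 0, one has Σ_{a ∈ {b−1, b+1}} ψ*_{ε'}(u)^a_b · ψ_ε(u)^b_a = 1 if ε' = ε, and = 0 if ε' ≠ ε. -/

import Mathlib

noncomputable section

open Complex Finset

namespace Ell

/-- `x^s = exp(-iπ s /(r τ))`. -/
def xp (τ : ℂ) (r : ℝ) (s : ℂ) : ℂ :=
  Complex.exp (-Complex.I * (Real.pi : ℂ) * s / ((r : ℂ) * τ))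

/-- `Θ_p(z) = ∏_{j ≥ 0} (1 - z p^j)(1 - p^{j+1}/z)(1 - p^{j+1})`. -/
def Theta (p z : ℂ) : ℂ :=
  ∏' j : ℕ, ((1 - z * p ^ j) * (1 - p ^ (j + 1) / z) * (1 - p ^ (j + 1)))

/-- The bracket `[u] = x^{u²/r - u} Θ_p(x^{2u})` with `p = x^{2r}`. -/
def br (τ : ℂ) (r : ℝ) (u : ℂ) : ℂ :=
  xp τ r (u ^ 2 / (r : ℂ) - u) * Theta (xp τ r (2 * (r : ℂ))) (xp τ r (2 * u))

/-- Elliptic shifted factorial `[u]_n = ∏_{j=0}^{n-1} [u+j]`. -/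
def brF (τ : ℂ) (r : ℝ) (u : ℂ) (n : ℕ) : ℂ :=
  ∏ j ∈ Finset.range n, br τ r (u + (j : ℂ))

/-- Elliptic binomial coefficient `C_n^k(α,β,γ)`. -/
def Cnk (τ : ℂ) (r : ℝ) (k n : ℕ) (α β γ : ℂ) : ℂ :=
  brF τ r 1 k / (brF τ r 1 n * brF τ r 1 (k - n)) *
    (brF τ r (α - γ) n * brF τ r (α + γ + (k : ℂ) - (n : ℂ)) n *
      brF τ r (α - β) (k - n) * brF τ r (α + β + (n : ℂ)) (k - n)) /
    (brF τ r (β - γ + (n : ℂ) - (k : ℂ)) n * brF τ r (γ - β - (n : ℂ)) (k - n) *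
      brF τ r (β + γ) k)

/-- The elliptic 6j-symbol `R_n^m(α,β,γ,δ;k)`. -/
def Rnm (τ : ℂ) (r : ℝ) (k n m : ℕ) (α β γ δ : ℂ) : ℂ :=
  ∑ j ∈ Finset.range (min n m + 1),
    Cnk τ r n j α γ (β + (k : ℂ) - (n : ℂ)) * Cnk τ r (k - j) (m - j) β (γ + (j : ℂ)) δ

/-- Terminating very-well-poised elliptic hypergeometric sum with explicit
truncation `N`:  `Σ_{j=0}^N ([u₀+2j]/[u₀]) ([u₀]_j/[1]_j) ∏ᵢ [uᵢ]_j/[u₀+1-uᵢ]_j`. -/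
def Vsum (τ : ℂ) (r : ℝ) (u₀ : ℂ) (us : List ℂ) (N : ℕ) : ℂ :=
  ∑ j ∈ Finset.range (N + 1),
    br τ r (u₀ + 2 * (j : ℂ)) / br τ r u₀ * (brF τ r u₀ j / brF τ r 1 j) *
      (us.map fun ui => brF τ r ui j / brF τ r (u₀ + 1 - ui) j).prod

/-- "Every bracket appearing in a denominator of `C_n^k(·,β,γ)` is nonzero". -/
def CdenomNZ (τ : ℂ) (r : ℝ) (k n : ℕ) (β γ : ℂ) : Prop :=
  brF τ r 1 n ≠ 0 ∧ brF τ r 1 (k - n) ≠ 0 ∧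
    brF τ r (β - γ + (n : ℂ) - (k : ℂ)) n ≠ 0 ∧
    brF τ r (γ - β - (n : ℂ)) (k - n) ≠ 0 ∧ brF τ r (β + γ) k ≠ 0

/-- "Every bracket appearing in a denominator of `R_n^m(α,β,γ,δ;k)` is nonzero". -/
def RdenomNZ (τ : ℂ) (r : ℝ) (k n m : ℕ) (β γ δ : ℂ) : Prop :=
  ∀ j ≤ min n m,
    CdenomNZ τ r n j γ (β + (k : ℂ) - (n : ℂ)) ∧
      CdenomNZ τ r (k - j) (m - j) (γ + (j : ℂ)) δ

/-- Jacobi theta `ϑ₁(v|σ)`. -/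
def th1 (v σ : ℂ) : ℂ :=
  2 * Complex.exp (2 * (Real.pi : ℂ) * Complex.I * σ / 8) *
    (∏' n : ℕ, (1 - Complex.exp (2 * (Real.pi : ℂ) * Complex.I * σ) ^ (n + 1))) *
    Complex.sin ((Real.pi : ℂ) * v) *
    ∏' n : ℕ,
      (1 - 2 * Complex.exp (2 * (Real.pi : ℂ) * Complex.I * σ) ^ (n + 1) *
            Complex.cos (2 * (Real.pi : ℂ) * v) +
        Complex.exp (2 * (Real.pi : ℂ) * Complex.I * σ) ^ (2 * (n + 1)))

/-- Jacobi theta `ϑ₀(v|σ)`. -/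
def th0 (v σ : ℂ) : ℂ :=
  -Complex.I * Complex.exp ((Real.pi : ℂ) * Complex.I * (v + σ / 4)) * th1 (v + σ / 2) σ

/-- Jacobi theta `ϑ₂(v|σ)`. -/
def th2 (v σ : ℂ) : ℂ := th1 (v + 1 / 2) σ

/-- Jacobi theta `ϑ₃(v|σ)`. -/
def th3 (v σ : ℂ) : ℂ :=
  Complex.exp ((Real.pi : ℂ) * Complex.I * (v + σ / 4)) * th1 (v + (σ + 1) / 2) σ

/-- Intertwining vector component `ψ_ε(u)^a_b`, `ε ∈ {1, -1}`. -/
def psi (τ : ℂ) (r : ℝ) (u : ℂ) (ε : ℤ) (a b : ℤ) : ℂ :=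
  if ε = 1 then th0 ((((a : ℂ) - (b : ℂ)) * u + (a : ℂ)) / (2 * (r : ℂ))) (τ / 2)
  else th3 ((((a : ℂ) - (b : ℂ)) * u + (a : ℂ)) / (2 * (r : ℂ))) (τ / 2)

/-- The constant `C = x^{-r/4} e^{-iπ/4} τ^{1/2}`. -/
def Cc (τ : ℂ) (r : ℝ) : ℂ :=
  xp τ r (-(r : ℂ) / 4) * Complex.exp (-(Real.pi : ℂ) * Complex.I / 4) * τ ^ (1 / 2 : ℂ)

/-- Dual intertwining vector component `ψ*_ε(u)^a_b = -ε(a-b) C² ψ_{-ε}(u-1)^a_b/(2[b][u])`. -/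
def psiStar (τ : ℂ) (r : ℝ) (u : ℂ) (ε : ℤ) (a b : ℤ) : ℂ :=
  -(ε : ℂ) * ((a : ℂ) - (b : ℂ)) * Cc τ r ^ 2 * psi τ r (u - 1) (-ε) a b /
    (2 * br τ r (b : ℂ) * br τ r u)

/-- Sign attached to a boolean. -/
def sg (b : Bool) : ℤ := if b then 1 else -1

/-- Canonical path from `a`: up for `j ≤ n`, down afterwards. -/
def cpathZ (a n : ℤ) (j : ℕ) : ℤ := if (j : ℤ) ≤ n then a + j else a + 2 * n - j

/-- Admissibility: `a - b ∈ {-k, -k+2, …, k}`. -/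
def adm (k : ℕ) (a b : ℤ) : Prop := (a - b).natAbs ≤ k ∧ (a - b - (k : ℤ)) % 2 = 0

instance (k : ℕ) (a b : ℤ) : Decidable (adm k a b) := by unfold adm; infer_instance

/-- Fused intertwining vector component `ψ^{(k)}_μ(u)^a_b` (zero if `a,b` not admissible). -/
def psiF (τ : ℂ) (r : ℝ) (k : ℕ) (μ : ℤ) (u : ℂ) (a b : ℤ) : ℂ :=
  if adm k a b then
    ∑ ε ∈ Finset.univ.filter fun ε : Fin k → Bool => (∑ j, sg (ε j)) = μ,
      ∏ j : Fin k,
        psi τ r (u + (k : ℂ) - (((j : ℕ) + 1 : ℕ) : ℂ)) (sg (ε j))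
          (cpathZ a (((k : ℤ) - (a - b)) / 2) (j : ℕ))
          (cpathZ a (((k : ℤ) - (a - b)) / 2) ((j : ℕ) + 1))
  else 0

/-- Partial-sum path attached to a sign sequence `δ`, starting at `a`. -/
def spath (k : ℕ) (a : ℤ) (δ : Fin k → Bool) (j : ℕ) : ℤ :=
  a + ∑ i ∈ Finset.range j, if h : i < k then sg (δ ⟨i, h⟩) else 0

/-- Fused dual intertwining vector component `ψ*^{(k)}_μ(u)^b_a`
(sum over all admissible paths from `a` to `b`; zero if not admissible). -/
def psiStarF (τ : ℂ) (r : ℝ) (k : ℕ) (μ : ℤ) (u : ℂ) (b a : ℤ) : ℂ :=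
  if adm k a b then
    ∑ δ ∈ Finset.univ.filter fun δ : Fin k → Bool => (∑ j, sg (δ j)) = b - a,
      ∏ j : Fin k,
        psiStar τ r (u + (k : ℂ) - (((j : ℕ) + 1 : ℕ) : ℂ))
          (if ((j : ℕ) + 1 : ℤ) ≤ ((k : ℤ) + μ) / 2 then 1 else -1)
          (spath k a δ ((j : ℕ) + 1)) (spath k a δ (j : ℕ))
  else 0

/-- The `L`-matrix `L^{(k)}(a,b;c,d|u) = Σ_μ ψ*^{(k)}_μ(u)^d_c ψ^{(k)}_μ(u)^a_b`. -/
def Lk (τ : ℂ) (r : ℝ) (k : ℕ) (u : ℂ) (a b c d : ℤ) : ℂ :=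
  ∑ i ∈ Finset.range (k + 1),
    psiStarF τ r k ((k : ℤ) - 2 * (i : ℤ)) u d c * psiF τ r k ((k : ℤ) - 2 * (i : ℤ)) u a b

/-- Normalized face weight `W̄(a,b;d,c|u)` (arguments ordered (NW, NE; SW, SE)). -/
def Wb (τ : ℂ) (r : ℝ) (u : ℂ) (a b d c : ℤ) : ℂ :=
  if b = a + 1 ∧ d = a + 1 ∧ c = a + 2 then 1
  else if b = a - 1 ∧ d = a - 1 ∧ c = a - 2 then 1
  else if b = a + 1 ∧ d = a + 1 ∧ c = a then
    br τ r ((a : ℂ) - u) * br τ r 1 / (br τ r (a : ℂ) * br τ r (1 + u))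
  else if b = a - 1 ∧ d = a - 1 ∧ c = a then
    br τ r ((a : ℂ) + u) * br τ r 1 / (br τ r (a : ℂ) * br τ r (1 + u))
  else if b = a + 1 ∧ d = a - 1 ∧ c = a then
    br τ r ((a : ℂ) + 1) * br τ r u / (br τ r (a : ℂ) * br τ r (1 + u))
  else if b = a - 1 ∧ d = a + 1 ∧ c = a then
    br τ r ((a : ℂ) - 1) * br τ r u / (br τ r (a : ℂ) * br τ r (1 + u))
  else 0

/-- Sequence with prescribed endpoints `d`, `c` and free interior values `f`. -/
def seqI (k : ℕ) (d c : ℤ) (f : Fin (k - 1) → ℤ) (j : ℕ) : ℤ :=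
  if h0 : j = 0 then d
  else if hj : j < k then f ⟨j - 1, by omega⟩ else c

/-- Fused face weight `W^{(k,1)}(a,b;d,c|u)`. -/
def Wk1 (τ : ℂ) (r : ℝ) (k : ℕ) (u : ℂ) (a b d c : ℤ) : ℂ :=
  if adm k a b then
    ∑' f : Fin (k - 1) → ℤ,
      ∏ j ∈ Finset.range k,
        Wb τ r (u + (k : ℂ) - ((j : ℂ) + 1))
          (cpathZ a (((k : ℤ) - (a - b)) / 2) j)
          (cpathZ a (((k : ℤ) - (a - b)) / 2) (j + 1))
          (seqI k d c f j) (seqI k d c f (j + 1))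
  else 0

/-- Fused face weight `W^{(k,l)}(a,b;d,c|u)`. -/
def Wkl (τ : ℂ) (r : ℝ) (k l : ℕ) (u : ℂ) (a b d c : ℤ) : ℂ :=
  if adm l b c then
    ∑' g : Fin (l - 1) → ℤ,
      ∏ i ∈ Finset.range l,
        Wk1 τ r k (u - (l : ℂ) + ((i : ℂ) + 1))
          (seqI l a d g i) (cpathZ b (((l : ℤ) - (b - c)) / 2) i)
          (seqI l a d g (i + 1)) (cpathZ b (((l : ℤ) - (b - c)) / 2) (i + 1))
  else 0

/-- Eight-vertex weight `ā(u)`. -/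
def aw (τ : ℂ) (r : ℝ) (u : ℂ) : ℂ :=
  th2 (1 / (2 * (r : ℂ))) (τ / 2) * th2 (u / (2 * (r : ℂ))) (τ / 2) /
    (th2 0 (τ / 2) * th2 ((1 + u) / (2 * (r : ℂ))) (τ / 2))

/-- Eight-vertex weight `b̄(u)`. -/
def bw (τ : ℂ) (r : ℝ) (u : ℂ) : ℂ :=
  th2 (1 / (2 * (r : ℂ))) (τ / 2) * th1 (u / (2 * (r : ℂ))) (τ / 2) /
    (th2 0 (τ / 2) * th1 ((1 + u) / (2 * (r : ℂ))) (τ / 2))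

/-- Eight-vertex weight `c̄(u)`. -/
def cw (τ : ℂ) (r : ℝ) (u : ℂ) : ℂ :=
  th1 (1 / (2 * (r : ℂ))) (τ / 2) * th2 (u / (2 * (r : ℂ))) (τ / 2) /
    (th2 0 (τ / 2) * th1 ((1 + u) / (2 * (r : ℂ))) (τ / 2))

/-- Eight-vertex weight `d̄(u)`. -/
def dw (τ : ℂ) (r : ℝ) (u : ℂ) : ℂ :=
  -(th1 (1 / (2 * (r : ℂ))) (τ / 2) * th1 (u / (2 * (r : ℂ))) (τ / 2)) /
    (th2 0 (τ / 2) * th2 ((1 + u) / (2 * (r : ℂ))) (τ / 2))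

/-- The normalized eight-vertex `R`-matrix entry `R̄(u)_{(ε₁,ε₂),(ε₁',ε₂')}`. -/
def Rbar (τ : ℂ) (r : ℝ) (u : ℂ) (e1 e2 e1' e2' : ℤ) : ℂ :=
  if e1' = e1 ∧ e2' = e2 ∧ e1 = e2 then aw τ r u
  else if e1' = e1 ∧ e2' = e2 ∧ e1 = -e2 then bw τ r u
  else if e1' = e2 ∧ e2' = e1 ∧ e1 = -e2 then cw τ r u
  else if e1' = -e1 ∧ e2' = -e2 ∧ e1 = e2 then dw τ r u
  else 0

/-- Sklyanin standard-basis vector `v_+(z)`. -/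
def vp (τ z : ℂ) : ℂ := th3 (2 * z) (2 * τ) - th2 (2 * z) (2 * τ)

/-- Sklyanin standard-basis vector `v_-(z)`. -/
def vm (τ z : ℂ) : ℂ := th3 (2 * z) (2 * τ) + th2 (2 * z) (2 * τ)


/-!
The Jacobi triple product, obtained as the limit of its finite form (a `q`-binomial identity),
turns every product in the statement into a theta series. Jacobi's imaginary transformation then
gives `[u] = C ϑ₁(u/r | τ)`. Each term of the sum over `a` is a product of one theta function at
`(b + u)/(2r)` and one at `(b - u)/(2r)`, and the two terms have opposite signs: for `ε' ≠ ε` they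
cancel, and for `ε' = ε` they combine into the left-hand side of
`ϑ₀(x+y|σ) ϑ₃(x-y|σ) - ϑ₃(x+y|σ) ϑ₀(x-y|σ) = 2 ϑ₁(2x|2σ) ϑ₁(2y|2σ)` with `σ = τ/2`. In the double
series on the left only the pairs of opposite parity survive, and a rotation of the index lattice
turns their sum into the double series on the right.
-/

/-! ### The finite triple product -/

section FiniteTripleProduct

variable {K : Type*} [Field K]

/-- The `q`-Pochhammer symbol `(Q; Q)_n`. -/
def qPoch (Q : K) (n : ℕ) : K := ∏ i ∈ range n, (1 - Q ^ (i + 1))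

/-- The reciprocal `1 / (Q; Q)_m` for integral `m`, with the usual convention that it vanishes
for `m < 0`; it makes the finite triple product a sum over all of `ℤ`. -/
def qPochInv (Q : K) (m : ℤ) : K := if 0 ≤ m then (qPoch Q m.toNat)⁻¹ else 0

/-- The coefficient `q^{k²} (q²; q²)_{2N} / ((q²; q²)_{N-k} (q²; q²)_{N+k})` of `z^k` in
`∏_{j<N} (1 + z q^{2j+1}) (1 + z⁻¹ q^{2j+1})`, that is `q^{k²}` times a Gaussian binomial. -/
def tripleProductCoeff (q : K) (N : ℕ) (k : ℤ) : K :=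
  q ^ (k ^ 2) * qPoch (q ^ 2) (2 * N) * qPochInv (q ^ 2) (N - k) * qPochInv (q ^ 2) (N + k)

lemma one_sub_pow_succ_ne_zero {Q : K} (hQ : ¬IsOfFinOrder Q) (n : ℕ) : 1 - Q ^ (n + 1) ≠ 0 :=
  fun h => hQ <| isOfFinOrder_iff_pow_eq_one.mpr ⟨n + 1, n.succ_pos, (sub_eq_zero.mp h).symm⟩

lemma qPoch_succ (Q : K) (n : ℕ) : qPoch Q (n + 1) = qPoch Q n * (1 - Q ^ (n + 1)) :=
  prod_range_succ _ n

lemma qPochInv_natCast (Q : K) (n : ℕ) : qPochInv Q n = (qPoch Q n)⁻¹ := by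
  simp [qPochInv]

lemma qPochInv_of_neg (Q : K) {m : ℤ} (hm : m < 0) : qPochInv Q m = 0 :=
  if_neg hm.not_ge

lemma qPochInv_sub_one {Q : K} (hQ : ¬IsOfFinOrder Q) (m : ℤ) :
    qPochInv Q (m - 1) = (1 - Q ^ m) * qPochInv Q m := by
  rcases lt_trichotomy m 0 with hneg | rfl | hpos
  · rw [qPochInv_of_neg Q hneg, qPochInv_of_neg Q (by lia), mul_zero]
  · rw [qPochInv_of_neg Q (by lia), zpow_zero, sub_self, zero_mul]
  · obtain ⟨n, rfl⟩ : ∃ n : ℕ, m = (n + 1 : ℕ) := ⟨(m - 1).toNat, by lia⟩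
    have hpred : ((n + 1 : ℕ) : ℤ) - 1 = n := by lia
    have hfactor := one_sub_pow_succ_ne_zero hQ n
    rw [hpred, qPochInv_natCast, qPochInv_natCast, qPoch_succ, zpow_natCast, mul_inv_rev,
      mul_inv_cancel_left₀ hfactor]

lemma zpow_add_one_sq {q : K} (hq : q ≠ 0) (k : ℤ) :
    q ^ ((k + 1) ^ 2) = q ^ (k ^ 2) * (q ^ k) ^ 2 * q := by
  rw [show (k + 1) ^ 2 = k ^ 2 + k * 2 + 1 by ring, zpow_add₀ hq, zpow_add₀ hq, zpow_one,
    zpow_mul, zpow_ofNat]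

lemma zpow_sub_one_sq {q : K} (hq : q ≠ 0) (k : ℤ) :
    q ^ ((k - 1) ^ 2) = q ^ (k ^ 2) / (q ^ k) ^ 2 * q := by
  rw [show (k - 1) ^ 2 = k ^ 2 - k * 2 + 1 by ring, zpow_add₀ hq, zpow_sub₀ hq, zpow_one,
    zpow_mul, zpow_ofNat]

lemma tripleProductCoeff_succ {q : K} (hq₀ : q ≠ 0) (hq : ¬IsOfFinOrder q) (N : ℕ) (k : ℤ) :
    tripleProductCoeff q (N + 1) k =
      (1 + q ^ (4 * N + 2)) * tripleProductCoeff q N k +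
        q ^ (2 * N + 1) * (tripleProductCoeff q N (k - 1) + tripleProductCoeff q N (k + 1)) := by
  have hq2 : ¬IsOfFinOrder (q ^ 2) := fun h => hq (h.of_pow two_ne_zero)
  have hpow (m : ℤ) : (q ^ 2) ^ m = (q ^ m) ^ 2 := by
    rw [← zpow_natCast, ← zpow_natCast, zpow_comm]
  have hpoch : qPoch (q ^ 2) (2 * (N + 1)) =
      qPoch (q ^ 2) (2 * N) * (1 - (q ^ N) ^ 4 * q ^ 2) * (1 - (q ^ N) ^ 4 * q ^ 4) := by
    rw [show 2 * (N + 1) = 2 * N + 1 + 1 by ring, qPoch_succ, qPoch_succ]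
    ring
  -- Every reciprocal in the identity is a multiple of the ones at `N + 1 - k` and `N + 1 + k`.
  have hminus : qPochInv (q ^ 2) (N - k) =
      (1 - (q ^ (N + 1 - k : ℤ)) ^ 2) * qPochInv (q ^ 2) (N + 1 - k) := by
    rw [← hpow, ← qPochInv_sub_one hq2, show (N : ℤ) + 1 - k - 1 = N - k by ring]
  have hplus : qPochInv (q ^ 2) (N + k) =
      (1 - (q ^ (N + 1 + k : ℤ)) ^ 2) * qPochInv (q ^ 2) (N + 1 + k) := by
    rw [← hpow, ← qPochInv_sub_one hq2, show (N : ℤ) + 1 + k - 1 = N + k by ring]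
  have hminus' : qPochInv (q ^ 2) (N - (k + 1)) =
      (1 - (q ^ (N - k : ℤ)) ^ 2) * qPochInv (q ^ 2) (N - k) := by
    rw [← hpow, ← qPochInv_sub_one hq2, sub_sub]
  have hplus' : qPochInv (q ^ 2) (N + (k - 1)) =
      (1 - (q ^ (N + k : ℤ)) ^ 2) * qPochInv (q ^ 2) (N + k) := by
    rw [← hpow, ← qPochInv_sub_one hq2, add_sub_assoc]
  have hk : q ^ k ≠ 0 := zpow_ne_zero k hq₀
  simp only [tripleProductCoeff, Nat.cast_add, Nat.cast_one, hminus', hplus', hminus, hplus,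
    hpoch, show (N : ℤ) - (k - 1) = N + 1 - k by ring,
    show (N : ℤ) + (k + 1) = N + 1 + k by ring, zpow_add_one_sq hq₀, zpow_sub_one_sq hq₀,
    zpow_add₀ hq₀, zpow_sub₀ hq₀, zpow_one, zpow_natCast]
  field_simp
  ring

lemma hasSum_tripleProductCoeff_mul_zpow [TopologicalSpace K] [IsTopologicalSemiring K] {q z : K}
    (hq₀ : q ≠ 0) (hq : ¬IsOfFinOrder q) (hz : z ≠ 0) (N : ℕ) :
    HasSum (fun k : ℤ => tripleProductCoeff q N k * z ^ k)
      (∏ j ∈ range N, ((1 + z * q ^ (2 * j + 1)) * (1 + z⁻¹ * q ^ (2 * j + 1)))) := by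
  induction N with
  | zero =>
    have hsupport (k : ℤ) (hk : k ≠ 0) : tripleProductCoeff q 0 k * z ^ k = 0 := by
      rcases hk.lt_or_gt with hneg | hpos
      · simp [tripleProductCoeff, qPochInv_of_neg (q ^ 2) hneg]
      · simp [tripleProductCoeff, qPochInv_of_neg (q ^ 2) (neg_neg_of_pos hpos)]
    simpa [tripleProductCoeff, qPochInv, qPoch] using hasSum_single 0 hsupport
  | succ N ih =>
    set P := ∏ j ∈ range N, ((1 + z * q ^ (2 * j + 1)) * (1 + z⁻¹ * q ^ (2 * j + 1)))
    have hpred := (Equiv.subRight (1 : ℤ)).hasSum_iff.mpr ih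
    have hsucc := (Equiv.addRight (1 : ℤ)).hasSum_iff.mpr ih
    have hrec := (ih.mul_left (1 + q ^ (4 * N + 2))).add
      ((hpred.mul_left (q ^ (2 * N + 1) * z)).add (hsucc.mul_left (q ^ (2 * N + 1) * z⁻¹)))
    have hfactor : P * ((1 + z * q ^ (2 * N + 1)) * (1 + z⁻¹ * q ^ (2 * N + 1))) =
        (1 + q ^ (4 * N + 2)) * P + (q ^ (2 * N + 1) * z * P + q ^ (2 * N + 1) * z⁻¹ * P) := by
      field_simp
      ring
    rw [prod_range_succ, hfactor]
    refine hrec.congr_fun fun k => ?_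
    simp only [Function.comp_apply, Equiv.subRight_apply, Equiv.coe_addRight,
      tripleProductCoeff_succ hq₀ hq, zpow_add₀ hz, zpow_sub₀ hz, zpow_one]
    field_simp

end FiniteTripleProduct

/-! ### The Jacobi triple product -/

section TripleProduct

open Filter Topology

variable {𝕜 : Type*} [NormedField 𝕜]

lemma not_isOfFinOrder_of_norm_lt_one {q : 𝕜} (hq : ‖q‖ < 1) : ¬IsOfFinOrder q :=
  fun h => hq.ne h.norm_eq_one

lemma norm_sq_lt_one {q : 𝕜} (hq : ‖q‖ < 1) : ‖q ^ 2‖ < 1 := by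
  rw [norm_pow]
  exact pow_lt_one₀ (norm_nonneg q) hq two_ne_zero

lemma summable_norm_const_mul_pow {p : 𝕜} (hp : ‖p‖ < 1) (c : 𝕜) :
    Summable fun j : ℕ => ‖c * p ^ j‖ := by
  simpa only [norm_mul, norm_pow] using
    (summable_geometric_of_lt_one (norm_nonneg p) hp).mul_left ‖c‖

variable [CompleteSpace 𝕜]

lemma multipliable_one_sub_mul_pow {p : 𝕜} (hp : ‖p‖ < 1) (c : 𝕜) :
    Multipliable fun j : ℕ => 1 - c * p ^ j := by
  simpa only [neg_mul, ← sub_eq_add_neg] using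
    multipliable_one_add_of_summable (summable_norm_const_mul_pow hp (-c))

lemma multipliable_one_sub_pow_div {p : 𝕜} (hp : ‖p‖ < 1) (z : 𝕜) :
    Multipliable fun j : ℕ => 1 - p ^ (j + 1) / z :=
  (multipliable_one_sub_mul_pow hp (p / z)).congr fun j => by ring

lemma multipliable_one_sub_pow_succ {p : 𝕜} (hp : ‖p‖ < 1) :
    Multipliable fun j : ℕ => 1 - p ^ (j + 1) := by
  simpa only [div_one] using multipliable_one_sub_pow_div hp 1

lemma tprod_one_sub_pow_ne_zero {p : 𝕜} (hp : ‖p‖ < 1) : ∏' j : ℕ, (1 - p ^ (j + 1)) ≠ 0 := by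
  simp only [sub_eq_add_neg]
  refine tprod_one_add_ne_zero_of_summable (fun j => ?_) ?_
  · rw [← sub_eq_add_neg]
    exact one_sub_pow_succ_ne_zero (not_isOfFinOrder_of_norm_lt_one hp) j
  · exact (summable_norm_const_mul_pow hp (-p)).congr fun j => by rw [pow_succ', neg_mul]

lemma tendsto_qPoch {p : 𝕜} (hp : ‖p‖ < 1) :
    Tendsto (qPoch p) atTop (𝓝 (∏' j : ℕ, (1 - p ^ (j + 1)))) :=
  (multipliable_one_sub_pow_succ hp).tendsto_prod_tprod_nat

lemma tendsto_inv_qPoch {p : 𝕜} (hp : ‖p‖ < 1) :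
    Tendsto (fun n => (qPoch p n)⁻¹) atTop (𝓝 (∏' j : ℕ, (1 - p ^ (j + 1)))⁻¹) :=
  (tendsto_qPoch hp).inv₀ (tprod_one_sub_pow_ne_zero hp)

lemma tendsto_qPochInv {p : 𝕜} (hp : ‖p‖ < 1) :
    Tendsto (qPochInv p) atTop (𝓝 (∏' j : ℕ, (1 - p ^ (j + 1)))⁻¹) := by
  have htoNat : Tendsto Int.toNat atTop atTop :=
    tendsto_atTop.mpr fun n => by
      filter_upwards [eventually_ge_atTop (n : ℤ)] with m hm
      lia
  refine ((tendsto_inv_qPoch hp).comp htoNat).congr' ?_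
  filter_upwards [eventually_ge_atTop 0] with m hm
  exact (if_pos hm).symm

lemma exists_norm_qPoch_le {p : 𝕜} (hp : ‖p‖ < 1) : ∃ M, ∀ n, ‖qPoch p n‖ ≤ M := by
  obtain ⟨M, hM⟩ := (tendsto_qPoch hp).norm.bddAbove_range
  exact ⟨M, fun n => hM ⟨n, rfl⟩⟩

lemma exists_norm_qPochInv_le {p : 𝕜} (hp : ‖p‖ < 1) : ∃ M, ∀ m, ‖qPochInv p m‖ ≤ M := by
  obtain ⟨M, hM⟩ := (tendsto_inv_qPoch hp).norm.bddAbove_range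
  have hM' (n : ℕ) : ‖(qPoch p n)⁻¹‖ ≤ M := hM ⟨n, rfl⟩
  refine ⟨M, fun m => ?_⟩
  rcases lt_or_ge m 0 with hneg | hnonneg
  · rw [qPochInv_of_neg p hneg, norm_zero]
    exact (norm_nonneg _).trans (hM' 0)
  · lift m to ℕ using hnonneg
    rw [qPochInv_natCast]
    exact hM' m

lemma tendsto_tripleProductCoeff {q : 𝕜} (hq : ‖q‖ < 1) (k : ℤ) :
    Tendsto (fun N => tripleProductCoeff q N k) atTop
      (𝓝 ((∏' j : ℕ, (1 - (q ^ 2) ^ (j + 1)))⁻¹ * q ^ (k ^ 2))) := by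
  have hq2 := norm_sq_lt_one hq
  have hE := tprod_one_sub_pow_ne_zero hq2
  set E := ∏' j : ℕ, (1 - (q ^ 2) ^ (j + 1))
  have hcast : Tendsto (fun N : ℕ => (N : ℤ)) atTop atTop := tendsto_natCast_atTop_atTop
  have htop : Tendsto (fun N => qPoch (q ^ 2) (2 * N)) atTop (𝓝 E) :=
    (tendsto_qPoch hq2).comp (tendsto_id.const_mul_atTop' two_pos)
  have hminus : Tendsto (fun N : ℕ => qPochInv (q ^ 2) (N - k)) atTop (𝓝 E⁻¹) :=
    (tendsto_qPochInv hq2).comp (tendsto_atTop_add_const_right _ (-k) hcast)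
  have hplus : Tendsto (fun N : ℕ => qPochInv (q ^ 2) (N + k)) atTop (𝓝 E⁻¹) :=
    (tendsto_qPochInv hq2).comp (tendsto_atTop_add_const_right _ k hcast)
  have hlimit : E⁻¹ * q ^ (k ^ 2) = q ^ (k ^ 2) * E * E⁻¹ * E⁻¹ := by
    field_simp
  rw [hlimit]
  exact ((htop.const_mul (q ^ (k ^ 2))).mul hminus).mul hplus

lemma exists_norm_tripleProductCoeff_le {q : 𝕜} (hq : ‖q‖ < 1) :
    ∃ M, ∀ N k, ‖tripleProductCoeff q N k‖ ≤ M * ‖q ^ (k ^ 2)‖ := by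
  obtain ⟨M, hM⟩ := exists_norm_qPoch_le (norm_sq_lt_one hq)
  obtain ⟨M', hM'⟩ := exists_norm_qPochInv_le (norm_sq_lt_one hq)
  have hM₀ : 0 ≤ M := (norm_nonneg _).trans (hM 0)
  have hM'₀ : 0 ≤ M' := (norm_nonneg _).trans (hM' 0)
  refine ⟨M * M' * M', fun N k => ?_⟩
  calc ‖tripleProductCoeff q N k‖
      = ‖qPoch (q ^ 2) (2 * N)‖ * ‖qPochInv (q ^ 2) (N - k)‖ * ‖qPochInv (q ^ 2) (N + k)‖ *
          ‖q ^ (k ^ 2)‖ := by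
        simp only [tripleProductCoeff, norm_mul]
        ring
    _ ≤ M * M' * M' * ‖q ^ (k ^ 2)‖ := by
        gcongr <;> apply_rules

lemma norm_exp_pi_mul_I_mul_lt_one_iff {σ : ℂ} : ‖exp (Real.pi * I * σ)‖ < 1 ↔ 0 < σ.im := by
  have hre : ((Real.pi : ℂ) * I * σ).re = -(Real.pi * σ.im) := by simp
  rw [norm_exp, Real.exp_lt_one_iff, hre, neg_lt_zero, mul_pos_iff_of_pos_left Real.pi_pos]

lemma jacobiTheta₂_term_eq_zpow (k : ℤ) (v σ : ℂ) :
    jacobiTheta₂_term k v σ = exp (Real.pi * I * σ) ^ (k ^ 2) * exp (2 * Real.pi * I * v) ^ k := by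
  rw [jacobiTheta₂_term, ← exp_int_mul, ← exp_int_mul, ← exp_add]
  push_cast
  ring_nf

lemma summable_norm_zpow_sq_mul_zpow {q z : ℂ} (hq₀ : q ≠ 0) (hq : ‖q‖ < 1) (hz : z ≠ 0) :
    Summable fun k : ℤ => ‖q ^ (k ^ 2) * z ^ k‖ := by
  obtain ⟨σ, rfl⟩ : ∃ σ, exp (Real.pi * I * σ) = q :=
    ⟨log q / (Real.pi * I), by rw [mul_div_cancel₀ _ (by simp [Real.pi_ne_zero]), exp_log hq₀]⟩
  obtain ⟨v, rfl⟩ : ∃ v, exp (2 * Real.pi * I * v) = z :=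
    ⟨log z / (2 * Real.pi * I), by rw [mul_div_cancel₀ _ two_pi_I_ne_zero, exp_log hz]⟩
  simp only [← jacobiTheta₂_term_eq_zpow]
  exact ((summable_jacobiTheta₂_term_iff v σ).mpr (norm_exp_pi_mul_I_mul_lt_one_iff.mp hq)).norm

lemma Theta_eq_tprod_mul_tprod {p : ℂ} (hp : ‖p‖ < 1) (z : ℂ) :
    Theta p z = (∏' j : ℕ, (1 - p ^ (j + 1))) *
      ∏' j : ℕ, ((1 - z * p ^ j) * (1 - p ^ (j + 1) / z)) := by
  rw [Theta, mul_comm, ← Multipliable.tprod_mul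
    ((multipliable_one_sub_mul_pow hp z).mul (multipliable_one_sub_pow_div hp z))
    (multipliable_one_sub_pow_succ hp)]

/-- The Jacobi triple product: let `N → ∞` in the finite triple product. -/
theorem tsum_zpow_sq_mul_zpow_eq_Theta {q z : ℂ} (hq₀ : q ≠ 0) (hq : ‖q‖ < 1) (hz : z ≠ 0) :
    ∑' k : ℤ, q ^ (k ^ 2) * z ^ k = Theta (q ^ 2) (-(z * q)) := by
  have hq2 := norm_sq_lt_one hq
  have hE := tprod_one_sub_pow_ne_zero hq2
  rw [Theta_eq_tprod_mul_tprod hq2]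
  set E := ∏' j : ℕ, (1 - (q ^ 2) ^ (j + 1))
  obtain ⟨M, hM⟩ := exists_norm_tripleProductCoeff_le hq
  have hsums : Tendsto (fun N => ∑' k : ℤ, tripleProductCoeff q N k * z ^ k) atTop
      (𝓝 (∑' k : ℤ, E⁻¹ * q ^ (k ^ 2) * z ^ k)) := by
    refine tendsto_tsum_of_dominated_convergence
      ((summable_norm_zpow_sq_mul_zpow hq₀ hq hz).mul_left M)
      (fun k => (tendsto_tripleProductCoeff hq k).mul_const (z ^ k))
      (Eventually.of_forall fun N k => ?_)
    rw [norm_mul, norm_mul, ← mul_assoc]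
    gcongr
    exact hM N k
  have hfactor (j : ℕ) : (1 + z * q ^ (2 * j + 1)) * (1 + z⁻¹ * q ^ (2 * j + 1)) =
      (1 - -(z * q) * (q ^ 2) ^ j) * (1 - (q ^ 2) ^ (j + 1) / -(z * q)) := by
    field_simp
    ring
  have hproducts : Tendsto (fun N => ∑' k : ℤ, tripleProductCoeff q N k * z ^ k) atTop
      (𝓝 (∏' j : ℕ, ((1 - -(z * q) * (q ^ 2) ^ j) * (1 - (q ^ 2) ^ (j + 1) / -(z * q))))) := by
    simp only [(hasSum_tripleProductCoeff_mul_zpow hq₀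
      (not_isOfFinOrder_of_norm_lt_one hq) hz _).tsum_eq, hfactor]
    exact ((multipliable_one_sub_mul_pow hq2 _).mul
      (multipliable_one_sub_pow_div hq2 _)).tendsto_prod_tprod_nat
  rw [← tendsto_nhds_unique hsums hproducts]
  simp only [mul_assoc, tsum_mul_left, mul_inv_cancel_left₀ hE]

end TripleProduct

/-! ### Theta functions as theta series -/

section ThetaSeries

lemma norm_exp_two_pi_mul_I_mul_lt_one {σ : ℂ} (hσ : 0 < σ.im) :
    ‖exp (2 * Real.pi * I * σ)‖ < 1 := by
  simpa using UpperHalfPlane.norm_exp_two_pi_I_lt_one ⟨σ, hσ⟩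

lemma Theta_exp_eq_jacobiTheta₂ {σ : ℂ} (hσ : 0 < σ.im) (v : ℂ) :
    Theta (exp (2 * Real.pi * I * σ)) (exp (2 * Real.pi * I * v)) =
      jacobiTheta₂ (v - σ / 2 + 1 / 2) σ := by
  have hp : exp (2 * Real.pi * I * σ) = exp (Real.pi * I * σ) ^ 2 := by
    rw [← exp_nat_mul]
    push_cast
    ring_nf
  have hz : exp (2 * Real.pi * I * v) =
      -(exp (2 * Real.pi * I * (v - σ / 2 + 1 / 2)) * exp (Real.pi * I * σ)) := by
    rw [← exp_add, ← exp_add_pi_mul_I, exp_eq_exp_iff_exists_int]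
    exact ⟨-1, by push_cast; ring⟩
  rw [hp, hz, ← tsum_zpow_sq_mul_zpow_eq_Theta (exp_ne_zero _)
    (norm_exp_pi_mul_I_mul_lt_one_iff.mpr hσ) (exp_ne_zero _), jacobiTheta₂]
  exact tsum_congr fun k => (jacobiTheta₂_term_eq_zpow k _ σ).symm

lemma Theta_eq_one_sub_mul_tprod {p : ℂ} (hp : ‖p‖ < 1) (z : ℂ) :
    Theta p z = (∏' j : ℕ, (1 - p ^ (j + 1))) * (1 - z) *
      ∏' j : ℕ, ((1 - z * p ^ (j + 1)) * (1 - p ^ (j + 1) / z)) := by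
  have hmul := multipliable_one_sub_mul_pow hp z
  have hdiv := multipliable_one_sub_pow_div hp z
  have hshift : Multipliable fun j : ℕ => 1 - z * p ^ (j + 1) :=
    (multipliable_one_sub_mul_pow hp (z * p)).congr fun j => by ring
  rw [Theta_eq_tprod_mul_tprod hp, hmul.tprod_mul hdiv, hshift.tprod_mul hdiv,
    tprod_eq_zero_mul' (f := fun j : ℕ => 1 - z * p ^ j) hshift, pow_zero, mul_one]
  ring

lemma two_mul_sin_pi_mul (v : ℂ) :
    2 * sin (Real.pi * v) = I * exp (-(Real.pi * I * v)) * (1 - exp (2 * Real.pi * I * v)) := by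
  have hexp : exp (Real.pi * v * I) =
      exp (-(Real.pi * I * v)) * exp (2 * Real.pi * I * v) := by
    rw [← exp_add]
    ring_nf
  rw [sin, hexp, show -(Real.pi * v) * I = -(Real.pi * I * v) by ring]
  ring

lemma one_sub_two_mul_cos_add_sq (v t : ℂ) :
    1 - 2 * t * cos (2 * Real.pi * v) + t ^ 2 =
      (1 - exp (2 * Real.pi * I * v) * t) * (1 - t / exp (2 * Real.pi * I * v)) := by
  have hexp : exp (2 * Real.pi * v * I) = exp (2 * Real.pi * I * v) := by ring_nf
  rw [cos, neg_mul, exp_neg, hexp]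
  field_simp [exp_ne_zero]
  ring

lemma th1_eq_Theta {σ : ℂ} (hσ : 0 < σ.im) (v : ℂ) :
    th1 v σ = I * exp (Real.pi * I * (σ / 4 - v)) *
      Theta (exp (2 * Real.pi * I * σ)) (exp (2 * Real.pi * I * v)) := by
  have hexp : exp (Real.pi * I * (σ / 4 - v)) =
      exp (2 * Real.pi * I * σ / 8) * exp (-(Real.pi * I * v)) := by
    rw [← exp_add]
    ring_nf
  simp only [th1, mul_comm 2 (_ + 1), pow_mul, one_sub_two_mul_cos_add_sq]
  rw [Theta_eq_one_sub_mul_tprod (norm_exp_two_pi_mul_I_mul_lt_one hσ), hexp]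
  linear_combination exp (2 * Real.pi * I * σ / 8) *
    (∏' j : ℕ, (1 - exp (2 * Real.pi * I * σ) ^ (j + 1))) *
    (∏' j : ℕ, ((1 - exp (2 * Real.pi * I * v) * exp (2 * Real.pi * I * σ) ^ (j + 1)) *
      (1 - exp (2 * Real.pi * I * σ) ^ (j + 1) / exp (2 * Real.pi * I * v)))) *
    two_mul_sin_pi_mul v

lemma th1_eq_jacobiTheta₂ {σ : ℂ} (hσ : 0 < σ.im) (v : ℂ) :
    th1 v σ = I * exp (Real.pi * I * (σ / 4 - v)) * jacobiTheta₂ (v - σ / 2 + 1 / 2) σ := by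
  rw [th1_eq_Theta hσ, Theta_exp_eq_jacobiTheta₂ hσ]

lemma th0_eq_jacobiTheta₂ {σ : ℂ} (hσ : 0 < σ.im) (v : ℂ) :
    th0 v σ = jacobiTheta₂ (v + 1 / 2) σ := by
  have hexp : exp (Real.pi * I * (v + σ / 4)) * exp (Real.pi * I * (σ / 4 - (v + σ / 2))) = 1 := by
    rw [← exp_add, ← exp_zero]
    ring_nf
  rw [th0, th1_eq_jacobiTheta₂ hσ, add_sub_cancel_right]
  linear_combination (-I ^ 2 * hexp - I_sq) * jacobiTheta₂ (v + 1 / 2) σ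

lemma th3_eq_jacobiTheta₂ {σ : ℂ} (hσ : 0 < σ.im) (v : ℂ) : th3 v σ = jacobiTheta₂ v σ := by
  have hexp : exp (Real.pi * I * (v + σ / 4)) * exp (Real.pi * I * (σ / 4 - (v + (σ + 1) / 2))) =
      -I := by
    rw [← exp_add, ← exp_neg_pi_div_two_mul_I]
    ring_nf
  rw [th3, th1_eq_jacobiTheta₂ hσ, show v + (σ + 1) / 2 - σ / 2 + 1 / 2 = v + 1 by ring,
    jacobiTheta₂_add_left]
  linear_combination (I * hexp - I_sq) * jacobiTheta₂ v σ

end ThetaSeries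

/-! ### The addition formula -/

section AdditionFormula

lemma jacobiTheta₂_term_add_half (n : ℤ) (v σ : ℂ) :
    jacobiTheta₂_term n (v + 1 / 2) σ = (-1) ^ n * jacobiTheta₂_term n v σ := by
  rw [jacobiTheta₂_term, jacobiTheta₂_term, ← exp_pi_mul_I, ← exp_int_mul, ← exp_add]
  ring_nf

lemma hasSum_jacobiTheta₂_mul_jacobiTheta₂ {σ : ℂ} (hσ : 0 < σ.im) (v w : ℂ) :
    HasSum (fun n : ℤ × ℤ => jacobiTheta₂_term n.1 v σ * jacobiTheta₂_term n.2 w σ)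
      (jacobiTheta₂ v σ * jacobiTheta₂ w σ) := by
  have hv := hasSum_jacobiTheta₂_term v hσ
  have hw := hasSum_jacobiTheta₂_term w hσ
  rw [jacobiTheta₂, jacobiTheta₂,
    tsum_mul_tsum_of_summable_norm hv.summable.norm hw.summable.norm]
  exact (summable_mul_of_summable_norm hv.summable.norm hw.summable.norm).hasSum

lemma neg_one_zpow_eq_of_even_sub {m n : ℤ} (h : Even (m - n)) : (-1 : ℂ) ^ m = (-1) ^ n := by
  rw [← sub_add_cancel m n, zpow_add₀ (by simp), h.neg_one_zpow, one_mul]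

/-- The substitution `(n, m) = (k + l - 1, k - l)` diagonalises `n² + m²` and parametrises the
pairs of opposite parity. -/
def oppositeParityPair (k : ℤ × ℤ) : ℤ × ℤ := (k.1 + k.2 - 1, k.1 - k.2)

lemma oppositeParityPair_injective : Function.Injective oppositeParityPair := by
  rintro ⟨k, l⟩ ⟨k', l'⟩ h
  simp only [oppositeParityPair, Prod.mk.injEq] at h ⊢
  lia

lemma even_sub_of_notMem_range_oppositeParityPair {n : ℤ × ℤ}
    (hn : n ∉ Set.range oppositeParityPair) : Even (n.1 - n.2) := by
  by_contra hodd
  obtain ⟨l, hl⟩ := Int.not_even_iff_odd.mp hodd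
  exact hn ⟨(n.2 + l + 1, l + 1), Prod.ext (by simp only [oppositeParityPair]; lia)
    (by simp only [oppositeParityPair]; lia)⟩

lemma jacobiTheta₂_term_mul_oppositeParityPair (x y σ : ℂ) (k l : ℤ) :
    jacobiTheta₂_term (k + l - 1) (x + y) σ * jacobiTheta₂_term (k - l) (x - y) σ =
      exp (Real.pi * I * (σ - 2 * x - 2 * y)) *
        (jacobiTheta₂_term k (2 * x - σ) (2 * σ) * jacobiTheta₂_term l (2 * y - σ) (2 * σ)) := by
  simp only [jacobiTheta₂_term, ← exp_add]
  push_cast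
  ring_nf

lemma jacobiTheta₂_mul_sub_jacobiTheta₂_mul {σ : ℂ} (hσ : 0 < σ.im) (x y : ℂ) :
    jacobiTheta₂ (x + y + 1 / 2) σ * jacobiTheta₂ (x - y) σ -
        jacobiTheta₂ (x + y) σ * jacobiTheta₂ (x - y + 1 / 2) σ =
      -2 * exp (Real.pi * I * (σ - 2 * x - 2 * y)) *
        (jacobiTheta₂ (2 * x - σ + 1 / 2) (2 * σ) * jacobiTheta₂ (2 * y - σ + 1 / 2) (2 * σ)) := by
  have hσ2 : 0 < (2 * σ).im := by simpa using hσ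
  have hleft := (hasSum_jacobiTheta₂_mul_jacobiTheta₂ hσ (x + y + 1 / 2) (x - y)).sub
    (hasSum_jacobiTheta₂_mul_jacobiTheta₂ hσ (x + y) (x - y + 1 / 2))
  have hright := (hasSum_jacobiTheta₂_mul_jacobiTheta₂ hσ2 (2 * x - σ + 1 / 2)
    (2 * y - σ + 1 / 2)).mul_left (-2 * exp (Real.pi * I * (σ - 2 * x - 2 * y)))
  simp only [jacobiTheta₂_term_add_half] at hleft hright
  rw [← oppositeParityPair_injective.hasSum_iff] at hleft
  · refine hleft.unique (hright.congr_fun fun ⟨k, l⟩ => ?_)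
    have hk_sub : (-1 : ℂ) ^ (k - l) = (-1) ^ k * (-1) ^ l := by
      rw [← zpow_add₀ (by simp)]
      exact neg_one_zpow_eq_of_even_sub ⟨-l, by ring⟩
    have hk_add : (-1 : ℂ) ^ (k + l - 1) = -((-1) ^ k * (-1) ^ l) := by
      rw [zpow_sub_one₀ (by simp), zpow_add₀ (by simp), inv_neg_one, mul_neg_one]
    simp only [Function.comp_apply, oppositeParityPair, hk_sub, hk_add]
    linear_combination -2 * ((-1) ^ k * (-1) ^ l) *
      jacobiTheta₂_term_mul_oppositeParityPair x y σ k l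
  · intro n hn
    rw [neg_one_zpow_eq_of_even_sub (even_sub_of_notMem_range_oppositeParityPair hn)]
    ring

theorem th0_mul_th3_sub_th3_mul_th0 {σ : ℂ} (hσ : 0 < σ.im) (x y : ℂ) :
    th0 (x + y) σ * th3 (x - y) σ - th3 (x + y) σ * th0 (x - y) σ =
      2 * th1 (2 * x) (2 * σ) * th1 (2 * y) (2 * σ) := by
  have hσ2 : 0 < (2 * σ).im := by simpa using hσ
  have hexp : exp (Real.pi * I * (2 * σ / 4 - 2 * x)) * exp (Real.pi * I * (2 * σ / 4 - 2 * y)) =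
      exp (Real.pi * I * (σ - 2 * x - 2 * y)) := by
    rw [← exp_add]
    ring_nf
  rw [th0_eq_jacobiTheta₂ hσ, th0_eq_jacobiTheta₂ hσ, th3_eq_jacobiTheta₂ hσ,
    th3_eq_jacobiTheta₂ hσ, th1_eq_jacobiTheta₂ hσ2, th1_eq_jacobiTheta₂ hσ2,
    jacobiTheta₂_mul_sub_jacobiTheta₂_mul hσ, mul_div_cancel_left₀ σ two_ne_zero, ← hexp]
  linear_combination (-2 * I_sq) * exp (Real.pi * I * (2 * σ / 4 - 2 * x)) *
    exp (Real.pi * I * (2 * σ / 4 - 2 * y)) * (jacobiTheta₂ (2 * x - σ + 1 / 2) (2 * σ) *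
      jacobiTheta₂ (2 * y - σ + 1 / 2) (2 * σ))

end AdditionFormula


/-! ### Brackets and intertwining vectors -/

section Intertwining

variable {τ : ℂ} {r : ℝ}

lemma ne_zero_of_im_pos (hτ : 0 < τ.im) : τ ≠ 0 := by
  rintro rfl
  exact hτ.false

lemma im_neg_one_div_pos (hτ : 0 < τ.im) : 0 < (-1 / τ).im := by
  simpa [neg_div] using UpperHalfPlane.im_inv_neg_coe_pos ⟨τ, hτ⟩

lemma neg_I_mul_cpow (hτ : 0 < τ.im) (s : ℂ) :
    (-I * τ) ^ s = exp (-(Real.pi / 2) * I * s) * τ ^ s := by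
  have hτ0 := ne_zero_of_im_pos hτ
  have harg : arg (-I) + arg τ ∈ Set.Ioc (-Real.pi) Real.pi := by
    have hnonneg : 0 ≤ arg τ := arg_nonneg_iff.mpr hτ.le
    rw [arg_neg_I]
    constructor <;> linarith [arg_le_pi τ, Real.pi_pos]
  rw [cpow_def_of_ne_zero (mul_ne_zero (neg_ne_zero.mpr I_ne_zero) hτ0), cpow_def_of_ne_zero hτ0,
    log_mul (neg_ne_zero.mpr I_ne_zero) hτ0 harg, log_neg_I, add_mul, exp_add]

lemma jacobiTheta₂_neg_one_div (hτ : τ ≠ 0) (z : ℂ) :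
    jacobiTheta₂ (z / τ) (-1 / τ) =
      (-I * τ) ^ (1 / 2 : ℂ) * exp (Real.pi * I * z ^ 2 / τ) * jacobiTheta₂ z τ := by
  have hroot : (-I * τ) ^ (1 / 2 : ℂ) ≠ 0 := by simp [cpow_eq_zero_iff, hτ]
  have hexp : exp (-Real.pi * I * z ^ 2 / τ) = (exp (Real.pi * I * z ^ 2 / τ))⁻¹ := by
    rw [← exp_neg]
    ring_nf
  rw [jacobiTheta₂_functional_equation z τ, hexp]
  field_simp [hroot]

lemma Cc_eq_cpow_mul_exp (hτ : 0 < τ.im) (hr : r ≠ 0) :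
    Cc τ r = (-I * τ) ^ (1 / 2 : ℂ) * exp (Real.pi * I / (4 * τ)) := by
  have hxp : xp τ r (-r / 4) = exp (Real.pi * I / (4 * τ)) := by
    have hr0 : (r : ℂ) ≠ 0 := ofReal_ne_zero.mpr hr
    rw [xp]
    congr 1
    field_simp
  rw [Cc, hxp, neg_I_mul_cpow hτ]
  ring_nf

lemma xp_sq_div_sub_mul_exp (hτ : τ ≠ 0) (hr : r ≠ 0) (u : ℂ) :
    xp τ r (u ^ 2 / r - u) * exp (Real.pi * I * (u / r - τ / 2 - 1 / 2) ^ 2 / τ) =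
      exp (Real.pi * I / (4 * τ)) * (I * exp (Real.pi * I * (τ / 4 - u / r))) := by
  have hr0 : (r : ℂ) ≠ 0 := ofReal_ne_zero.mpr hr
  have hI (w : ℂ) : I * exp w = exp (Real.pi / 2 * I + w) := by
    rw [exp_add, exp_pi_div_two_mul_I]
  rw [hI, xp, ← exp_add, ← exp_add]
  congr 1
  field_simp
  ring

theorem br_eq_Cc_mul_th1 (hτ : 0 < τ.im) (hr : r ≠ 0) (u : ℂ) :
    br τ r u = Cc τ r * th1 (u / r) τ := by
  have hτ0 := ne_zero_of_im_pos hτ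
  have hr0 : (r : ℂ) ≠ 0 := ofReal_ne_zero.mpr hr
  have hnome : xp τ r (2 * r) = exp (2 * Real.pi * I * (-1 / τ)) := by
    rw [xp]
    congr 1
    field_simp
  have harg : xp τ r (2 * u) = exp (2 * Real.pi * I * (-u / (r * τ))) := by
    rw [xp]
    ring_nf
  have hshift : -u / (r * τ) - -1 / τ / 2 + 1 / 2 = -(u / r - τ / 2 - 1 / 2) / τ := by
    field_simp
    ring
  have hperiod : jacobiTheta₂ (u / r - τ / 2 - 1 / 2) τ =
      jacobiTheta₂ (u / r - τ / 2 + 1 / 2) τ := by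
    rw [← jacobiTheta₂_add_left]
    ring_nf
  rw [br, hnome, harg, Theta_exp_eq_jacobiTheta₂ (im_neg_one_div_pos hτ), hshift,
    jacobiTheta₂_neg_one_div hτ0, neg_sq, jacobiTheta₂_neg_left, hperiod, th1_eq_jacobiTheta₂ hτ,
    Cc_eq_cpow_mul_exp hτ hr]
  linear_combination (-I * τ) ^ (1 / 2 : ℂ) * jacobiTheta₂ (u / r - τ / 2 + 1 / 2) τ *
    xp_sq_div_sub_mul_exp hτ0 hr u

/-- The theta function underlying `ψ_ε`, as a function of `s = (a - b) u + a`. Like `psi`, it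
treats every `ε ≠ 1` as `ε = -1`. -/
def psiTheta (τ : ℂ) (r : ℝ) (ε : ℤ) (s : ℂ) : ℂ :=
  if ε = 1 then th0 (s / (2 * r)) (τ / 2) else th3 (s / (2 * r)) (τ / 2)

lemma Cc_sq_mul_psiTheta_sub (hτ : 0 < τ.im) (hr : r ≠ 0) (s u : ℂ) :
    Cc τ r ^ 2 * (psiTheta τ r 1 (s + u) * psiTheta τ r (-1) (s - u) -
      psiTheta τ r (-1) (s + u) * psiTheta τ r 1 (s - u)) = 2 * br τ r s * br τ r u := by
  have hτ2 : 0 < (τ / 2).im := by simpa using hτ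
  have hadd := th0_mul_th3_sub_th3_mul_th0 hτ2 (s / (2 * r)) (u / (2 * r))
  have hdouble (w : ℂ) : 2 * (w / (2 * r)) = w / r := by ring
  rw [← add_div, ← sub_div, hdouble, hdouble, mul_div_cancel₀ τ two_ne_zero] at hadd
  simp only [psiTheta, reduceIte, show (-1 : ℤ) ≠ 1 by decide]
  rw [hadd, br_eq_Cc_mul_th1 hτ hr, br_eq_Cc_mul_th1 hτ hr]
  ring

lemma psi_eq_psiTheta (u : ℂ) (ε a b : ℤ) :
    psi τ r u ε a b = psiTheta τ r ε ((a - b) * u + a) := rfl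

lemma sum_psiStar_mul_psi (u : ℂ) (ε ε' b : ℤ) :
    ∑ a ∈ ({b - 1, b + 1} : Finset ℤ), psiStar τ r u ε' a b * psi τ r u ε b a =
      ε' * (Cc τ r ^ 2 * (psiTheta τ r ε (b + u) * psiTheta τ r (-ε') (b - u) -
        psiTheta τ r (-ε') (b + u) * psiTheta τ r ε (b - u))) / (2 * br τ r b * br τ r u) := by
  rw [sum_pair (by lia)]
  simp only [psiStar, psi_eq_psiTheta]
  push_cast
  ring_nf

end Intertwining

/-- Second inversion relation for intertwining vectors. -/
theorem inversion_second (τ : ℂ) (r : ℝ) (hτ : 0 < τ.im) (hr : 0 < r)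
    (b : ℤ) (ε ε' : ℤ) (hε : ε = 1 ∨ ε = -1) (hε' : ε' = 1 ∨ ε' = -1) (u : ℂ)
    (hu : br τ r u ≠ 0) (hb : br τ r (b : ℂ) ≠ 0) :
    ∑ a ∈ ({b - 1, b + 1} : Finset ℤ), psiStar τ r u ε' a b * psi τ r u ε b a =
      if ε' = ε then 1 else 0 := by
  have hbilinear := Cc_sq_mul_psiTheta_sub hτ hr.ne' (b : ℂ) u
  have hden : 2 * br τ r b * br τ r u ≠ 0 := mul_ne_zero (mul_ne_zero two_ne_zero hb) hu
  rw [sum_psiStar_mul_psi]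
  split_ifs with hεε'
  · subst hεε'
    rw [div_eq_one_iff_eq hden, ← hbilinear]
    rcases hε with rfl | rfl <;> push_cast <;> ring_nf
  · obtain rfl : ε = -ε' := by lia
    rw [mul_comm (psiTheta τ r (-ε') _), sub_self, mul_zero, mul_zero, zero_div]

end Ell
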